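/- arXiv:1812.10696 — 2 statements merged into one kernel-verified Lean document; each statement's English description precedes it below -/
import Mathlib

section
/- For all integers q ≥ 3, the constant J(q) := (1/q) inf_{0<x<1} ((1−x^q)/(1−x)) x^{−(q−1)/3} satisfies 0.8414 ≤ J(q) ≤ 0.9184. -/
/-!
Write `n = q - 1`. Up to the factor `1 / q`, the function whose infimum is taken is the sum of
`x ^ (i - n / 3)` over `0 ≤ i ≤ n`, so `J(q)` is an infimum of averages of the convex function
`t ↦ exp (-λ (t - 1 / 3))` over `q` equally spaced points `i / n` of `[0, 1]`.

*Upper bound.* Fix `Y = 0.593`, close to the minimiser for `q = 3`, and take `x = Y ^ (2 / n)`.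
Bounding the convex function by its chords on `[0, 1/2]` and `[1/2, 1]`
(`rpow_le_chord`), and using that the average of `|1 - 2 i / n|` is at most `2 / 3`
(`sum_abs_le`), the average is at most `(1 + Y + Y ^ 2) / 3 * Y ^ (-2 / 3)`, its value at `q = 3`,
for every `q ≥ 3`; this number is less than `0.9184`.

*Lower bound.* The average over equally spaced points is at least the integral over `[0, 1]`
(`integral_le_average`, a consequence of `tanh a ≤ a`, which is `two_mul_one_sub_le`). With `z = x ^ (-n / 3)` the integral equals `(z - z⁻²) / (3 log z)`, and
`c_mul_log_le` bounds this below by `0.8414` for all `z > 1`.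
-/

noncomputable def Jq (q : ℕ) : ℝ :=
  (1 / q) * sInf {y : ℝ | ∃ x : ℝ, 0 < x ∧ x < 1 ∧
    y = (1 - x ^ q) / (1 - x) * x ^ (-(((q : ℝ) - 1) / 3))}

/-! ### The lower bound -/

/-- The Padé bound `tanh a ≤ a` in the variable `y = exp (-2 a)`. -/
lemma two_mul_one_sub_le {y : ℝ} (hy : 0 < y) (hy1 : y ≤ 1) :
    2 * (1 - y) ≤ -Real.log y * (1 + y) := by
  have h := Real.le_log_one_add_of_nonneg (x := y⁻¹ - 1)
    (by have := (one_le_inv₀ hy).2 hy1; linarith)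
  have e : 1 + (y⁻¹ - 1) = y⁻¹ := by ring
  rw [e, Real.log_inv] at h
  have e2 : 2 * (y⁻¹ - 1) / (y⁻¹ - 1 + 2) = 2 * (1 - y) / (1 + y) := by
    have h0 : y⁻¹ - 1 + 2 = (1 + y) / y := by field_simp; ring
    have h1 : (1 + y) ≠ 0 := by positivity
    rw [h0]
    field_simp
  rw [e2, div_le_iff₀ (by linarith)] at h
  exact h

/-- Cross-multiplied form of: the average of `x ^ (n t)` over the points `t = i / n`, `0 ≤ i ≤ n`,
is at least its integral over `[0, 1]`. -/
lemma integral_le_average {x : ℝ} (hx : 0 < x) (hx1 : x < 1) (n : ℕ) :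
    (n + 1) * (1 - x ^ n) * (1 - x) ≤ n * (-Real.log x) * (1 - x ^ (n + 1)) := by
  have hX1 : x ^ n ≤ 1 := pow_le_one₀ hx.le hx1.le
  have h1 := two_mul_one_sub_le hx hx1.le
  have h2 := two_mul_one_sub_le (pow_pos hx n) hX1
  rw [Real.log_pow] at h2
  have hn : (0 : ℝ) ≤ n := n.cast_nonneg
  have h3 := mul_le_mul_of_nonneg_left h2 (sub_nonneg.2 hx1.le)
  have h4 := mul_le_mul_of_nonneg_left h1 (mul_nonneg hn (sub_nonneg.2 hX1))
  rw [pow_succ]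
  -- `2 (1 - x X) = (1 - x) (1 + X) + (1 + x) (1 - X)` with `X = x ^ n`
  linear_combination (1 / 2) * h3 + (1 / 2) * h4

lemma log_le_half {w : ℝ} (hw : 1 ≤ w) : Real.log w ≤ (w - w⁻¹) / 2 := by
  rw [← Real.sinh_log (by linarith)]
  exact Real.self_le_sinh_iff.2 (Real.log_nonneg hw)

/-- The function `z ↦ (z - z⁻²) / (3 log z)` is at least `0.8414` on `z > 1`, in cross-multiplied
form. Its minimum is `0.841434…`, attained near `2.047`. -/
lemma c_mul_log_le {z : ℝ} (hz : 1 ≤ z) : 0.8414 * (3 * Real.log z) ≤ z - (z ^ 2)⁻¹ := by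
  have hz0 : 0 < z := by linarith
  rcases le_total z 1.4 with h | h
  · have h1 := log_le_half hz
    have h2 : 0 ≤ z - (z ^ 2)⁻¹ - 1.2621 * (z - z⁻¹) := by
      have : z - (z ^ 2)⁻¹ - 1.2621 * (z - z⁻¹)
          = (z - 1) * (1 - 0.2621 * z * (z + 1)) / z ^ 2 := by
        field_simp
        ring
      rw [this]
      have : 0 ≤ 1 - 0.2621 * z * (z + 1) := by nlinarith
      have : 0 ≤ z - 1 := by linarith
      positivity
    linarith
  · -- The slightly larger constant `k / 3 = 0.841417…` makes the critical point `s` rational: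
    -- `z ^ 3 - k z ^ 2 + 2 = (z - s) (z ^ 2 - 2 z / s ^ 2 - 2 / s)`.
    obtain ⟨s, hs⟩ : ∃ s : ℝ, s = 2.0469 := ⟨_, rfl⟩
    obtain ⟨k, hk⟩ : ∃ k : ℝ, k = (s ^ 3 + 2) / s ^ 2 := ⟨_, rfl⟩
    let F : ℝ → ℝ := fun t => t - (t ^ 2)⁻¹ - k * Real.log t
    have hd : ∀ t : ℝ, 0 < t → HasDerivAt F
        ((t - s) * (t ^ 2 - 2 * t / s ^ 2 - 2 / s) / t ^ 3) t := by
      intro t ht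
      have h1 := ((hasDerivAt_id t).sub (((hasDerivAt_id t).pow 2).inv (by simp; positivity))).sub
        ((Real.hasDerivAt_log ht.ne').const_mul k)
      have hs0 : s ≠ 0 := by rw [hs]; norm_num
      have e : 1 - -(((2 : ℕ) : ℝ) * t ^ (2 - 1) * 1) / (t ^ 2) ^ 2 - k * t⁻¹
          = (t - s) * (t ^ 2 - 2 * t / s ^ 2 - 2 / s) / t ^ 3 := by
        rw [hk]
        field_simp
        push_cast
        ring
      rw [← e]
      exact h1
    have hq : ∀ t : ℝ, 1.4 ≤ t → 0 ≤ t ^ 2 - 2 * t / s ^ 2 - 2 / s := by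
      intro t ht
      rw [hs]
      norm_num
      nlinarith
    have hFs : 0 ≤ F s := by
      have h1 := log_le_half (w := s / 2) (by rw [hs]; norm_num)
      rw [Real.log_div (by rw [hs]; norm_num) (by norm_num)] at h1
      have h2 := Real.log_two_lt_d9
      have h3 : Real.log s ≤ 0.6931471808 + (s / 2 - (s / 2)⁻¹) / 2 := by linarith
      have hk0 : 0 ≤ k := by rw [hk, hs]; norm_num
      have h4 := mul_le_mul_of_nonneg_left h3 hk0
      have h5 : k * (0.6931471808 + (s / 2 - (s / 2)⁻¹) / 2) ≤ s - (s ^ 2)⁻¹ := by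
        rw [hk, hs]; norm_num
      simp only [F]
      linarith
    have hFz : F s ≤ F z := by
      rcases le_total z s with hzs | hzs
      · refine antitoneOn_of_deriv_nonpos (convex_Icc 1.4 s)
          (fun t ht => (hd t (by linarith [ht.1])).continuousAt.continuousWithinAt)
          (fun t ht => ?_) (fun t ht => ?_) ⟨h, hzs⟩ ⟨h.trans hzs, le_rfl⟩ hzs
        · rw [interior_Icc] at ht
          exact (hd t (by linarith [ht.1])).differentiableAt.differentiableWithinAt
        · rw [interior_Icc] at ht
          have ht0 : 0 < t := by linarith [ht.1]
          rw [(hd t ht0).deriv]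
          exact div_nonpos_of_nonpos_of_nonneg
            (mul_nonpos_of_nonpos_of_nonneg (by linarith [ht.2]) (hq t ht.1.le)) (by positivity)
      · have hs0 : 1.4 ≤ s := by rw [hs]; norm_num
        refine monotoneOn_of_deriv_nonneg (convex_Ici s)
          (fun t ht => (hd t (by linarith [Set.mem_Ici.1 ht])).continuousAt.continuousWithinAt)
          (fun t ht => ?_) (fun t ht => ?_) Set.self_mem_Ici hzs hzs
        · rw [interior_Ici] at ht
          exact (hd t (by linarith [Set.mem_Ioi.1 ht])).differentiableAt.differentiableWithinAt
        · rw [interior_Ici] at ht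
          have ht := Set.mem_Ioi.1 ht
          have ht0 : 0 < t := by linarith
          rw [(hd t ht0).deriv]
          exact div_nonneg (mul_nonneg (by linarith) (hq t (by linarith))) (by positivity)
    have hkc : 0.8414 * 3 ≤ k := by rw [hk, hs]; norm_num
    have := mul_le_mul_of_nonneg_right hkc (Real.log_nonneg hz)
    simp only [F] at hFz hFs
    linarith

lemma lower {n : ℕ} (hn : 2 ≤ n) {x : ℝ} (hx : 0 < x) (hx1 : x < 1) :
    0.8414 * ((n : ℝ) + 1) ≤ (1 - x ^ (n + 1)) / (1 - x) * x ^ (-((n : ℝ) / 3)) := by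
  have hn0 : (0 : ℝ) < n := by positivity
  obtain ⟨z, hz⟩ : ∃ z : ℝ, z = x ^ (-((n : ℝ) / 3)) := ⟨_, rfl⟩
  rw [← hz]
  have hz0 : 0 < z := hz ▸ Real.rpow_pos_of_pos hx _
  have hlog : 3 * Real.log z = n * (-Real.log x) := by
    rw [hz, Real.log_rpow hx]; ring
  have hX : x ^ n * z ^ 3 = 1 := by
    rw [hz, ← Real.rpow_natCast, ← Real.rpow_natCast, ← Real.rpow_mul hx.le, ← Real.rpow_add hx]
    have : (n : ℝ) + -(n / 3) * ((3 : ℕ) : ℝ) = 0 := by push_cast; ring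
    rw [this, Real.rpow_zero]
  have hz1 : 1 ≤ z := by
    rw [hz]
    exact Real.one_le_rpow_of_pos_of_le_one_of_nonpos hx hx1.le (by linarith)
  have h1 := c_mul_log_le hz1
  have h2 := integral_le_average hx hx1 n
  have hzX : z - (z ^ 2)⁻¹ = z * (1 - x ^ n) := by
    have : (z ^ 2)⁻¹ = z * x ^ n := by
      refine inv_eq_of_mul_eq_one_right ?_
      linear_combination hX
    rw [this]; ring
  rw [hzX, hlog] at h1
  have hA : 0 < n * (-Real.log x) := mul_pos hn0 (by linarith [Real.log_neg hx hx1])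
  have h1x : 0 < 1 - x := by linarith
  rw [div_mul_eq_mul_div, le_div_iff₀ h1x]
  refine le_of_mul_le_mul_left ?_ hA
  have h3 := mul_le_mul_of_nonneg_left h1 (mul_nonneg (by positivity : (0 : ℝ) ≤ n + 1) h1x.le)
  have h4 := mul_le_mul_of_nonneg_left h2 hz0.le
  linarith

/-! ### The upper bound -/

/-- The chord bound for the convex function `u ↦ Y ^ (1 - u)` on `[-1, 0]` and on `[0, 1]`. -/
lemma rpow_le_chord {Y u : ℝ} (hY : 0 < Y) (hu : |u| ≤ 1) :
    Y ^ (1 - u) ≤ (1 - |u|) * Y + (|u| + u) / 2 * 1 + (|u| - u) / 2 * Y ^ 2 := by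
  have h := Real.geom_mean_le_arith_mean3_weighted (w₁ := 1 - |u|) (w₂ := (|u| + u) / 2)
    (w₃ := (|u| - u) / 2) (p₁ := Y) (p₂ := 1) (p₃ := Y ^ 2) (by linarith)
    (by linarith [neg_abs_le u]) (by linarith [le_abs_self u]) hY.le zero_le_one (by positivity)
    (by ring)
  refine le_trans (le_of_eq ?_) h
  rw [Real.one_rpow, mul_one, ← Real.rpow_natCast Y 2, ← Real.rpow_mul hY.le, ← Real.rpow_add hY]
  congr 1
  push_cast
  ring

lemma sum_sub (n : ℕ) : ∑ i ∈ Finset.range (n + 1), ((n : ℝ) - 2 * i) = 0 := by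
  have h : ∀ m : ℕ, ∑ i ∈ Finset.range m, ((n : ℝ) - 2 * i) = m * (n + 1 - m) := by
    intro m
    induction m with
    | zero => simp
    | succ m ih => rw [Finset.sum_range_succ, ih]; push_cast; ring
  rw [h]; push_cast; ring

/-- The average of `|1 - 2 i / n|` over `0 ≤ i ≤ n` is at most `2 / 3`, with equality at `n = 2`
and `n = 3`. -/
lemma sum_abs_le {n : ℕ} (hn : 2 ≤ n) :
    3 * ∑ i ∈ Finset.range (n + 1), |(n : ℝ) - 2 * i| ≤ 2 * n * (n + 1) := by
  -- passing from `n` to `n + 2` adds the two end terms `n + 2`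
  induction n using Nat.strong_induction_on with
  | _ n ih =>
    rcases Nat.lt_or_ge n 4 with h | h
    · interval_cases n
      · norm_num [Finset.sum_range_succ]
      · norm_num [Finset.sum_range_succ, abs_of_neg, abs_of_pos]
    · obtain ⟨m, rfl⟩ : ∃ m, n = m + 2 := ⟨n - 2, by omega⟩
      have := ih m (by omega) (by omega)
      rw [Finset.sum_range_succ, Finset.sum_range_succ']
      have e : ∀ i : ℕ, ((m + 2 : ℕ) : ℝ) - 2 * ((i + 1 : ℕ) : ℝ) = m - 2 * i := by
        intro i; push_cast; ring
      rw [Finset.sum_congr rfl fun i _ => congrArg abs (e i)]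
      have e1 : |((m + 2 : ℕ) : ℝ) - 2 * ((0 : ℕ) : ℝ)| = m + 2 := by
        push_cast; rw [abs_of_nonneg] <;> [ring; (ring_nf; positivity)]
      have e2 : |((m + 2 : ℕ) : ℝ) - 2 * ((m + 2 : ℕ) : ℝ)| = m + 2 := by
        push_cast; rw [abs_of_nonpos] <;> [ring; (ring_nf; linarith [(m.cast_nonneg : (0:ℝ) ≤ m)])]
      rw [e1, e2]
      push_cast
      linarith

lemma sum_rpow_le {n : ℕ} (hn : 2 ≤ n) {Y : ℝ} (hY : 0 < Y) :
    ∑ i ∈ Finset.range (n + 1), (Y ^ (2 / (n : ℝ))) ^ i ≤ (n + 1) * ((1 + Y + Y ^ 2) / 3) := by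
  have hn0 : (0 : ℝ) < n := by positivity
  have h1 : ∀ i ∈ Finset.range (n + 1), (Y ^ (2 / (n : ℝ))) ^ i ≤
      Y + (1 - Y) ^ 2 / (2 * n) * |(n : ℝ) - 2 * i| + (1 - Y ^ 2) / (2 * n) * (n - 2 * i) := by
    intro i hi
    have hi : (i : ℝ) ≤ n := by exact_mod_cast Nat.lt_succ_iff.1 (Finset.mem_range.1 hi)
    have hi0 : (0 : ℝ) ≤ i := i.cast_nonneg
    have habs : |((n : ℝ) - 2 * i) / n| = |(n : ℝ) - 2 * i| / n := by
      rw [abs_div, abs_of_pos hn0]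
    have h := rpow_le_chord (u := ((n : ℝ) - 2 * i) / n) hY (by
      rw [habs, div_le_one hn0, abs_le]; constructor <;> linarith)
    have e : (Y ^ (2 / (n : ℝ))) ^ i = Y ^ (1 - ((n : ℝ) - 2 * i) / n) := by
      rw [← Real.rpow_natCast, ← Real.rpow_mul hY.le]
      congr 1
      field_simp
      ring
    rw [e]
    refine h.trans (le_of_eq ?_)
    rw [habs]
    field_simp
    ring
  refine (Finset.sum_le_sum h1).trans ?_
  rw [Finset.sum_add_distrib, Finset.sum_add_distrib, ← Finset.mul_sum, ← Finset.mul_sum, sum_sub,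
    Finset.sum_const, Finset.card_range, nsmul_eq_mul, mul_zero, add_zero]
  have h2 := mul_le_mul_of_nonneg_left (sum_abs_le hn)
    (by positivity : 0 ≤ (1 - Y) ^ 2 / (2 * n) / 3)
  have e : (1 - Y) ^ 2 / (2 * n) / 3 * (2 * n * (n + 1)) = (1 - Y) ^ 2 / 3 * ((n : ℝ) + 1) := by
    field_simp
  rw [e] at h2
  push_cast
  linarith

lemma upper {n : ℕ} (hn : 2 ≤ n) : ∃ x : ℝ, 0 < x ∧ x < 1 ∧
    (1 - x ^ (n + 1)) / (1 - x) * x ^ (-((n : ℝ) / 3)) ≤ 0.9184 * ((n : ℝ) + 1) := by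
  have hn0 : (0 : ℝ) < n := by positivity
  obtain ⟨Y, hY⟩ : ∃ Y : ℝ, Y = 0.593 := ⟨_, rfl⟩
  have hY0 : 0 < Y := by rw [hY]; norm_num
  have hx1 : Y ^ (2 / (n : ℝ)) < 1 :=
    Real.rpow_lt_one hY0.le (by rw [hY]; norm_num) (by positivity)
  refine ⟨Y ^ (2 / (n : ℝ)), Real.rpow_pos_of_pos hY0 _, hx1, ?_⟩
  have e1 : (1 - (Y ^ (2 / (n : ℝ))) ^ (n + 1)) / (1 - Y ^ (2 / (n : ℝ)))
      = ∑ i ∈ Finset.range (n + 1), (Y ^ (2 / (n : ℝ))) ^ i := by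
    rw [geom_sum_eq hx1.ne, ← neg_div_neg_eq, neg_sub, neg_sub]
  have e2 : (Y ^ (2 / (n : ℝ))) ^ (-((n : ℝ) / 3)) = Y ^ (-(2 / 3) : ℝ) := by
    rw [← Real.rpow_mul hY0.le]
    congr 1
    field_simp
  rw [e1, e2]
  obtain ⟨W, hW⟩ : ∃ W : ℝ, W = Y ^ (-(2 / 3) : ℝ) := ⟨_, rfl⟩
  rw [← hW]
  have hW0 : 0 < W := hW ▸ Real.rpow_pos_of_pos hY0 _
  have hW3 : W ^ 3 * Y ^ 2 = 1 := by
    rw [hW, ← Real.rpow_natCast, ← Real.rpow_natCast, ← Real.rpow_mul hY0.le, ← Real.rpow_add hY0]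
    norm_num
  have hnum : (1 + Y + Y ^ 2) / 3 * W ≤ 0.9184 := by
    refine le_of_pow_le_pow_left₀ (n := 3) (by norm_num) (by norm_num) ?_
    rw [mul_pow]
    have : W ^ 3 = 1 / Y ^ 2 := by field_simp; exact hW3
    rw [this, hY]
    norm_num
  calc _ ≤ ((n : ℝ) + 1) * ((1 + Y + Y ^ 2) / 3) * W :=
        mul_le_mul_of_nonneg_right (sum_rpow_le hn hY0) hW0.le
    _ = ((1 + Y + Y ^ 2) / 3 * W) * ((n : ℝ) + 1) := by ring
    _ ≤ _ := mul_le_mul_of_nonneg_right hnum (by positivity)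

theorem stmt_8 (q : ℕ) (hq : 3 ≤ q) :
    (0.8414 : ℝ) ≤ Jq q ∧ Jq q ≤ 0.9184 := by
  obtain ⟨n, rfl⟩ : ∃ n, q = n + 1 := ⟨q - 1, by omega⟩
  have hn : 2 ≤ n := by omega
  have hq0 : (0 : ℝ) < n + 1 := by positivity
  unfold Jq
  push_cast
  rw [add_sub_cancel_right, one_div_mul_eq_div, le_div_iff₀ hq0, div_le_iff₀ hq0]
  have hlb : ∀ y ∈ {y : ℝ | ∃ x : ℝ, 0 < x ∧ x < 1 ∧
      y = (1 - x ^ (n + 1)) / (1 - x) * x ^ (-((n : ℝ) / 3))}, 0.8414 * ((n : ℝ) + 1) ≤ y := by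
    rintro y ⟨x, hx, hx1, rfl⟩
    exact lower hn hx hx1
  obtain ⟨x, hx, hx1, h⟩ := upper hn
  exact ⟨le_csInf ⟨_, x, hx, hx1, rfl⟩ hlb, (csInf_le ⟨_, hlb⟩ ⟨x, hx, hx1, rfl⟩).trans h⟩
end

section
/- Suppose F ⊆ ℝ^n is a finite set such that the set of distances between distinct points of F has at most s elements. Then |F| ≤ C(n + s, s). -/
/-!
This is the Petrov–Pohoata argument, in the spirit of Croot–Lev–Pach.

If `|F| > C(n + s, s)`, the number of monomials of degree at most `s` in `n` variables, then some
nonzero weight `f : F → ℝ` is orthogonal to every such monomial (`exists_weight`). A polynomial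
`p(x, y)` of total degree at most `2s` is a combination of monomials `m₁(x) m₂(y)` in which `m₁` or
`m₂` has degree at most `s`, so the quadratic form `∑ p(a, b) f(a) f(b)` vanishes
(`sum_eval_eq_zero`). Taking `p(x, y) = ∏ (d² - |x - y|²)` over the distances `d` of `F`, the matrix
`p(a, b)` is a positive multiple of the identity, so that `∑ f(a)² = 0`, a contradiction.
-/

/-- A finite family of more than `C(n + s, s)` points carries a nonzero weight that annihilates all
monomials of degree at most `s`. The monomials are counted by homogenization: each is a product of
exactly `s` of the `n + 1` quantities `1, x₁, …, xₙ`. -/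
theorem exists_weight {n s : ℕ} {α : Type*} [Fintype α] (x : α → Fin n → ℝ)
    (h : (n + s).choose s < Fintype.card α) :
    ∃ f : α → ℝ, f ≠ 0 ∧ ∀ g : Fin n → ℕ, ∑ i, g i ≤ s → ∑ a, f a * ∏ i, x a i ^ g i = 0 := by
  let T : (α → ℝ) →ₗ[ℝ] (Sym (Fin (n + 1)) s → ℝ) :=
    { toFun := fun f m =>
        ∑ a, f a * ((m : Multiset (Fin (n + 1))).map (Fin.cons 1 (x a) : Fin (n + 1) → ℝ)).prod
      map_add' := fun f g => by
        ext m
        simp only [Pi.add_apply, add_mul, Finset.sum_add_distrib]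
      map_smul' := fun c f => by
        ext m
        simp only [Pi.smul_apply, smul_eq_mul, mul_assoc, Finset.mul_sum, RingHom.id_apply] }
  have hT : LinearMap.ker T ≠ ⊥ := by
    apply LinearMap.ker_ne_bot_of_finrank_lt
    rw [Module.finrank_fintype_fun_eq_card, Module.finrank_fintype_fun_eq_card,
      Sym.card_sym_eq_choose, Fintype.card_fin]
    rwa [show n + 1 + s - 1 = n + s by lia]
  obtain ⟨f, hf, hf0⟩ := Submodule.exists_mem_ne_zero_of_ne_bot hT
  refine ⟨f, hf0, fun g hg => ?_⟩
  -- pad the monomial `g` with the constant variable up to degree exactly `s`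
  let M : Multiset (Fin (n + 1)) :=
    Multiset.replicate (s - ∑ i, g i) 0 + ∑ i, Multiset.replicate (g i) i.succ
  have hM : M.card = s := by
    simp only [M, Multiset.card_add, Multiset.card_replicate, Multiset.card_sum]
    lia
  have := congrFun (LinearMap.mem_ker.mp hf) ⟨M, hM⟩
  have key : ∀ a, (M.map (Fin.cons 1 (x a) : Fin (n + 1) → ℝ)).prod = ∏ i, x a i ^ g i := by
    intro a
    have h1 : M.map (Fin.cons 1 (x a) : Fin (n + 1) → ℝ)
        = Multiset.replicate (s - ∑ i, g i) 1 + ∑ i, Multiset.replicate (g i) (x a i) := by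
      simp only [M, Multiset.map_add, Multiset.map_replicate, Fin.cons_zero]
      rw [← Multiset.coe_mapAddMonoidHom, map_sum]
      simp
    rw [h1, Multiset.prod_add, Multiset.prod_sum]
    simp
  calc ∑ a, f a * ∏ i, x a i ^ g i
      = ∑ a, f a * (M.map (Fin.cons 1 (x a) : Fin (n + 1) → ℝ)).prod := by simp only [key]
    _ = 0 := this

/-- If a weight annihilates all monomials of degree at most `s`, then the quadratic form of any
`p(x, y)` of total degree at most `2s` vanishes at it: in every monomial of `p`, the `x`-part or the
`y`-part has degree at most `s`. -/
theorem sum_eval_eq_zero {n s : ℕ} {α : Type*} [Fintype α] (x : α → Fin n → ℝ) (f : α → ℝ)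
    (hf : ∀ g : Fin n → ℕ, ∑ i, g i ≤ s → ∑ a, f a * ∏ i, x a i ^ g i = 0)
    (p : MvPolynomial (Fin n ⊕ Fin n) ℝ) (hp : p.totalDegree ≤ 2 * s) :
    ∑ a, ∑ b, f a * f b * MvPolynomial.eval (Sum.elim (x a) (x b)) p = 0 := by
  have h1 : ∑ a, ∑ b, f a * f b * MvPolynomial.eval (Sum.elim (x a) (x b)) p
      = ∑ m ∈ p.support, p.coeff m *
        ((∑ a, f a * ∏ i, x a i ^ m (Sum.inl i)) * ∑ b, f b * ∏ i, x b i ^ m (Sum.inr i)) := by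
    simp only [MvPolynomial.eval_eq', Fintype.prod_sum_type, Sum.elim_inl, Sum.elim_inr]
    simp_rw [Finset.sum_mul_sum, Finset.mul_sum]
    rw [Finset.sum_comm (s := p.support)]
    refine Finset.sum_congr rfl fun a _ => ?_
    rw [Finset.sum_comm]
    refine Finset.sum_congr rfl fun m _ => Finset.sum_congr rfl fun b _ => ?_
    ring
  rw [h1]
  refine Finset.sum_eq_zero fun m hm => ?_
  have hdeg : ∑ i, m (Sum.inl i) + ∑ i, m (Sum.inr i) ≤ 2 * s := by
    have := (MvPolynomial.le_totalDegree hm).trans hp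
    rwa [Finsupp.sum_fintype _ _ (fun _ => rfl), Fintype.sum_sum_type] at this
  rcases le_or_gt (∑ i, m (Sum.inl i)) s with h | h
  · rw [hf _ h]; simp
  · rw [hf (fun i => m (Sum.inr i)) (by lia)]; simp

open MvPolynomial in
/-- The polynomial `∏ (d² - |x - y|²)`, over `d ∈ D`, in the coordinates of `x` (left summand) and
`y` (right summand). -/
noncomputable def distPoly (n : ℕ) (D : Finset ℝ) : MvPolynomial (Fin n ⊕ Fin n) ℝ :=
  ∏ d ∈ D, (C (d ^ 2) - ∑ i, (X (Sum.inl i) - X (Sum.inr i)) ^ 2)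

theorem totalDegree_distPoly_le (n : ℕ) (D : Finset ℝ) :
    (distPoly n D).totalDegree ≤ 2 * D.card := by
  refine (MvPolynomial.totalDegree_finsetProd _ _).trans ?_
  rw [mul_comm, ← smul_eq_mul]
  refine Finset.sum_le_card_nsmul _ _ _ fun d _ => ?_
  refine (MvPolynomial.totalDegree_sub _ _).trans (max_le (by rw [MvPolynomial.totalDegree_C]; lia) ?_)
  refine MvPolynomial.totalDegree_finsetSum_le fun i _ => ?_
  refine (MvPolynomial.totalDegree_pow _ _).trans ?_
  have := MvPolynomial.totalDegree_sub (R := ℝ) (MvPolynomial.X (Sum.inl i : Fin n ⊕ Fin n))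
    (MvPolynomial.X (Sum.inr i))
  simp only [MvPolynomial.totalDegree_X, max_self] at this
  lia

theorem eval_distPoly (n : ℕ) (D : Finset ℝ) (p q : EuclideanSpace ℝ (Fin n)) :
    MvPolynomial.eval (Sum.elim p q) (distPoly n D) = ∏ d ∈ D, (d ^ 2 - dist p q ^ 2) := by
  simp [distPoly, EuclideanSpace.dist_sq_eq, Real.dist_eq, sq_abs]

theorem stmt_11 (n s : ℕ) (F : Set (EuclideanSpace ℝ (Fin n))) (hF : F.Finite)
    (hdist : {d : ℝ | ∃ p₁ ∈ F, ∃ p₂ ∈ F, p₁ ≠ p₂ ∧ d = dist p₁ p₂}.ncard ≤ s) :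
    F.ncard ≤ (n + s).choose s := by
  set D := {d : ℝ | ∃ p₁ ∈ F, ∃ p₂ ∈ F, p₁ ≠ p₂ ∧ d = dist p₁ p₂} with hD
  -- `ncard` is meaningful only once the distance set is known to be finite
  have hDfin : D.Finite := by
    refine ((hF.prod hF).image fun p => dist p.1 p.2).subset ?_
    rintro d ⟨p, hp, q, hq, -, rfl⟩
    exact ⟨(p, q), ⟨hp, hq⟩, rfl⟩
  have := hF.fintype
  by_contra! hlt
  rw [← Nat.card_coe_set_eq, Nat.card_eq_fintype_card] at hlt
  obtain ⟨f, hf0, hf⟩ := exists_weight (fun a : F => (a.1 : Fin n → ℝ)) hlt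
  have hcard : hDfin.toFinset.card ≤ s := by rwa [← Set.ncard_eq_toFinset_card D hDfin]
  have hzero := sum_eval_eq_zero _ f hf (distPoly n hDfin.toFinset)
    ((totalDegree_distPoly_le n _).trans (by lia))
  simp only [eval_distPoly] at hzero
  have hc : 0 < ∏ d ∈ hDfin.toFinset, d ^ 2 := by
    refine Finset.prod_pos fun d hd => ?_
    obtain ⟨p, -, q, -, hne, rfl⟩ := hDfin.mem_toFinset.mp hd
    have := dist_pos.mpr hne
    positivity
  have hdiag : ∀ a : F, ∑ b : F, f a * f b * ∏ d ∈ hDfin.toFinset,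
      (d ^ 2 - dist (a : EuclideanSpace ℝ (Fin n)) b ^ 2)
        = f a ^ 2 * ∏ d ∈ hDfin.toFinset, d ^ 2 := by
    intro a
    rw [Finset.sum_eq_single a]
    · simp [sq]
    · intro b _ hb
      rw [Finset.prod_eq_zero (i := dist (a : EuclideanSpace ℝ (Fin n)) b), mul_zero]
      · exact hDfin.mem_toFinset.mpr
          ⟨a, a.2, b, b.2, fun h => hb (Subtype.ext h.symm), rfl⟩
      · simp
    · simp
  simp only [hdiag] at hzero
  rw [← Finset.sum_mul, mul_eq_zero, or_iff_left hc.ne',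
    Finset.sum_eq_zero_iff_of_nonneg fun a _ => sq_nonneg (f a)] at hzero
  exact hf0 (funext fun a => pow_eq_zero_iff two_ne_zero |>.mp (hzero a (Finset.mem_univ a)))
end
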